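/- arXiv:1907.01373 — 2 statements merged into one kernel-verified Lean document; each statement's English description precedes it below -/
import Mathlib

section
/- Let 0<s<1 and 1<p<∞ satisfy sp>1. There is a constant C depending only on s and p such that for every metric space (X,d), every open interval I ⊆ ℝ and every continuous map u : I → X, one has ∫_I∫_I (osc_{[x,y]} u)^p / |y-x|^{1+sp} dx dy ≤ C ∫_I∫_I d(u(x),u(y))^p / |y-x|^{1+sp} dx dy. -/
open MeasureTheory Set ENNReal

/-- The oscillation of a map `u` into a metric space on the set `A`, valued in `ℝ≥0∞`. -/
noncomputable def oscE {X : Type*} [PseudoEMetricSpace X] (u : ℝ → X) (A : Set ℝ) : ℝ≥0∞ :=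
  ⨆ z ∈ A, ⨆ t ∈ A, edist (u z) (u t)

lemma aux_young (p : ℝ) (hp : 1 < p) (a e : ℝ≥0∞) (he0 : e ≠ 0) (het : e ≠ ⊤) :
    a ≤ e + e ^ (1 - p) * a ^ p := by
  rcases le_total a e with h | h
  · exact h.trans le_self_add
  · refine le_trans ?_ le_add_self
    have h1 : a ^ p = a * a ^ (p - 1) := by
      have := ENNReal.rpow_add_of_nonneg (x := a) 1 (p - 1) (by norm_num) (by linarith)
      simpa using this
    calc a = e ^ (1 - p) * (a * e ^ (p - 1)) := by
          rw [mul_left_comm, ← ENNReal.rpow_add _ _ he0 het]; simp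
      _ ≤ _ := by
          rw [h1]; gcongr

lemma aux_step {X : Type*} [MetricSpace X] (p : ℝ) (hp : 1 < p) (u : ℝ → X) (z : ℝ)
    (μ ν : Measure ℝ) [IsProbabilityMeasure μ] [IsProbabilityMeasure ν]
    (hν : AEMeasurable (fun w => edist (u z) (u w)) ν) (e : ℝ≥0∞) (he0 : e ≠ 0) (het : e ≠ ⊤) :
    ∫⁻ w, edist (u z) (u w) ∂μ ≤ (∫⁻ w, edist (u z) (u w) ∂ν) +
      (e + e ^ (1 - p) * ∫⁻ w, ∫⁻ t, edist (u w) (u t) ^ p ∂ν ∂μ) := by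
  have hc : e ^ (1 - p) ≠ ⊤ := by
    simp [ENNReal.rpow_eq_top_iff, he0, het]
  have key : ∀ w, edist (u z) (u w) ≤ (∫⁻ t, edist (u z) (u t) ∂ν) +
      (e + e ^ (1 - p) * ∫⁻ t, edist (u w) (u t) ^ p ∂ν) := by
    intro w
    calc edist (u z) (u w) = ∫⁻ t, edist (u z) (u w) ∂ν := by simp
      _ ≤ ∫⁻ t, (edist (u z) (u t) + (e + e ^ (1 - p) * edist (u w) (u t) ^ p)) ∂ν := by
          apply lintegral_mono
          intro t
          have h1 := edist_triangle (u z) (u t) (u w)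
          rw [edist_comm (u t)] at h1
          exact h1.trans (add_le_add le_rfl (aux_young p hp _ e he0 het))
      _ = _ := by
          rw [lintegral_add_left' hν, lintegral_add_left measurable_const,
            lintegral_const_mul' _ _ hc]
          simp
  calc _ ≤ ∫⁻ w, ((∫⁻ t, edist (u z) (u t) ∂ν) +
      (e + e ^ (1 - p) * ∫⁻ t, edist (u w) (u t) ^ p ∂ν)) ∂μ := lintegral_mono key
    _ = _ := by
      rw [lintegral_add_left measurable_const, lintegral_add_left measurable_const,
            lintegral_const_mul' _ _ hc]
      simp

/-- tail integral -/
lemma aux_tail (q : ℝ) (hq : 1 < q) (c : ℝ) (hc : 0 < c) :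
    ∫⁻ v in Ioi c, ENNReal.ofReal v ^ (-q) = ENNReal.ofReal (c ^ (1 - q) / (q - 1)) := by
  have h1 : ∫⁻ v in Ioi c, ENNReal.ofReal v ^ (-q) = ∫⁻ v in Ioi c, ENNReal.ofReal (v ^ (-q)) := by
    apply setLIntegral_congr_fun measurableSet_Ioi
    intro v hv
    exact ENNReal.ofReal_rpow_of_pos (hc.trans hv)
  rw [h1, ← ofReal_integral_eq_lintegral_ofReal]
  · rw [integral_Ioi_rpow_of_lt (by linarith) hc]
    congr 1
    rw [show -q + 1 = -(q - 1) by ring, neg_div_neg_eq, show -(q-1) = 1 - q by ring]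
  · exact integrableOn_Ioi_rpow_of_lt (by linarith) hc
  · filter_upwards [self_mem_ae_restrict measurableSet_Ioi] with v hv
    exact Real.rpow_nonneg (hc.trans hv).le _

lemma aux_tail2 (q : ℝ) (hq : 1 < q) (c : ℝ≥0∞) (hc : c ≠ 0) (hct : c ≠ ⊤) (z : ℝ) :
    ∫⁻ x, {x | c ≤ edist x z}.indicator (fun x => edist x z ^ (-q)) x
      ≤ ENNReal.ofReal (2 / (q - 1)) * c ^ (1 - q) := by
  lift c to NNReal using hct
  have hc' : 0 < (c : ℝ) := by
    have : c ≠ 0 := by exact_mod_cast hc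
    positivity
  have e0 : ∀ x z : ℝ, edist x z = ENNReal.ofReal |x - z| := fun x z => by
    rw [edist_dist, Real.dist_eq]
  have h1 : ∫⁻ x, {x | (c : ℝ≥0∞) ≤ edist x z}.indicator (fun x => edist x z ^ (-q)) x =
     ∫⁻ x, {x : ℝ | (c : ℝ) ≤ |x|}.indicator (fun x => ENNReal.ofReal |x| ^ (-q)) x := by
    rw [← lintegral_sub_right_eq_self (μ := volume) ({x : ℝ | (c : ℝ) ≤ |x|}.indicator _) z]
    congr 1
    ext x
    simp only [indicator, mem_ofPred_eq, e0]
    congr 1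
    rw [← ENNReal.ofReal_coe_nnreal, ENNReal.ofReal_le_ofReal_iff (abs_nonneg _)]
  have hm : MeasurableSet {x : ℝ | (c : ℝ) ≤ |x|} := measurableSet_le (by fun_prop) (by fun_prop)
  rw [h1, lintegral_indicator hm]
  have h2 : {x : ℝ | (c : ℝ) ≤ |x|} = Iic (-(c : ℝ)) ∪ Ici (c : ℝ) := by
    ext x; simp only [mem_ofPred_eq, mem_union, mem_Iic, mem_Ici, le_abs]
    constructor <;> rintro (h | h)
    · right; linarith
    · left; linarith
    · right; linarith
    · left; linarith
  have h3 : ∫⁻ x in Ici (c : ℝ), ENNReal.ofReal |x| ^ (-q) =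
      ENNReal.ofReal ((c : ℝ) ^ (1 - q) / (q - 1)) := by
    rw [← aux_tail q hq c hc', setLIntegral_congr Ioi_ae_eq_Ici.symm]
    apply setLIntegral_congr_fun measurableSet_Ioi
    intro v hv
    have : (0:ℝ) < v := hc'.trans hv
    simp only [abs_of_pos this]
  have h4 : ∫⁻ x in Iic (-(c : ℝ)), ENNReal.ofReal |x| ^ (-q) =
      ∫⁻ x in Ici (c : ℝ), ENNReal.ofReal |x| ^ (-q) := by
    rw [← lintegral_indicator measurableSet_Iic, ← lintegral_indicator measurableSet_Ici,
      ← lintegral_neg_eq_self]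
    congr 1; ext x
    simp [indicator]
  rw [h2]
  refine (lintegral_union_le _ _ _).trans ?_
  rw [h4, h3, ← ENNReal.ofReal_coe_nnreal, ENNReal.ofReal_rpow_of_pos hc',
    ← ENNReal.ofReal_mul (by apply div_nonneg <;> linarith), ← ENNReal.ofReal_add]
  · apply le_of_eq; congr 1; ring
  · have := Real.rpow_nonneg hc'.le (1 - q)
    apply div_nonneg <;> linarith
  · have := Real.rpow_nonneg hc'.le (1 - q)
    apply div_nonneg <;> linarith

lemma aux_kernel (δ : ℝ) (hδ : 0 < δ) (c : ℝ≥0∞) (hc : c ≠ 0) (hct : c ≠ ⊤) (z : ℝ) :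
    ∫⁻ x, ∫⁻ y, {P : ℝ × ℝ | c ≤ edist P.1 z ∧ edist P.1 z ≤ edist P.1 P.2}.indicator
        (fun P => edist P.1 P.2 ^ (-(2 + δ))) (x, y)
      ≤ ENNReal.ofReal (2 / (1 + δ)) * (ENNReal.ofReal (2 / δ) * c ^ (-δ)) := by
  have h : ∀ x, ∫⁻ y, {P : ℝ × ℝ | c ≤ edist P.1 z ∧ edist P.1 z ≤ edist P.1 P.2}.indicator
        (fun P => edist P.1 P.2 ^ (-(2 + δ))) (x, y) ≤ ENNReal.ofReal (2 / (1 + δ)) * 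
        {x | c ≤ edist x z}.indicator (fun x => edist x z ^ (-(1 + δ))) x := by
    intro x
    by_cases hx : c ≤ edist x z
    · have := aux_tail2 (2 + δ) (by linarith) (edist x z)
        (fun h => hc (by rw [h] at hx; simpa using hx)) (edist_ne_top _ _) x
      rw [show 2 + δ - 1 = 1 + δ by ring, show 1 - (2 + δ) = -(1 + δ) by ring] at this
      simp only [indicator, mem_ofPred_eq, hx, true_and, if_true] at this ⊢
      simpa only [edist_comm _ x] using this
    · simp [indicator, hx]
  calc _ ≤ _ := lintegral_mono h
    _ = _ := lintegral_const_mul' _ _ ENNReal.ofReal_ne_top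
    _ ≤ _ := by
      gcongr
      have := aux_tail2 (1 + δ) (by linarith) c hc hct z
      simpa [show 1 - (1 + δ) = -δ by ring] using this

lemma aux_prob (a b : ℝ) (hab : a < b) :
    IsProbabilityMeasure ((ENNReal.ofReal (b - a))⁻¹ • (volume : Measure ℝ).restrict (Icc a b)) := by
  constructor
  simp only [Measure.smul_apply, Measure.restrict_apply_univ, Real.volume_Icc, smul_eq_mul]
  exact ENNReal.inv_mul_cancel (by simp [hab]) ENNReal.ofReal_ne_top

lemma aux_edist_Icc {a b w t : ℝ} (hw : w ∈ Icc a b) (ht : t ∈ Icc a b) :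
    edist w t ≤ ENNReal.ofReal (b - a) := by
  rw [edist_dist, Real.dist_eq]
  apply ENNReal.ofReal_le_ofReal
  rw [abs_le]; constructor <;> linarith [hw.1, hw.2, ht.1, ht.2]

lemma aux_pt {X : Type*} [MetricSpace X] (p τ : ℝ) (hp : 1 < p) (hτ : 1 < τ) (u : ℝ → X)
    (w t : ℝ) (L : ℝ≥0∞) (h : edist w t ≤ L) :
    edist (u w) (u t) ^ p ≤ L ^ (1 + τ) * (edist (u w) (u t) ^ p / edist w t ^ (1 + τ)) := by
  rcases eq_or_ne w t with rfl | hne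
  · simp [show 0 < p by linarith]
  · have h0 : edist w t ^ (1 + τ) ≠ 0 := by
      simp [ENNReal.rpow_eq_zero_iff, hne, edist_ne_top]
    have h1 : edist w t ^ (1 + τ) ≠ ⊤ := by
      simp [ENNReal.rpow_eq_top_iff, hne, edist_ne_top]
    calc edist (u w) (u t) ^ p
        = edist w t ^ (1 + τ) * (edist (u w) (u t) ^ p / edist w t ^ (1 + τ)) := by
          rw [ENNReal.mul_div_cancel h0 h1]
      _ ≤ _ := by gcongr

lemma aux_step2 {X : Type*} [MetricSpace X] (p τ : ℝ) (hp : 1 < p) (hτ : 1 < τ) (u : ℝ → X)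
    (z a b a' b' : ℝ) (ha : a ≤ a') (hb : b' ≤ b) (hab : a' < b') (hl : b' - a' = (b - a) / 2)
    (hu : ContinuousOn u (Icc a' b')) (e E : ℝ≥0∞) (he0 : e ≠ 0) (het : e ≠ ⊤)
    (hE : ∫⁻ w in Icc a b, ∫⁻ t in Icc a b, edist (u w) (u t) ^ p / edist w t ^ (1 + τ) ≤ E) :
    (ENNReal.ofReal (b - a))⁻¹ * ∫⁻ w in Icc a b, edist (u z) (u w) ≤
    (ENNReal.ofReal (b' - a'))⁻¹ * (∫⁻ w in Icc a' b', edist (u z) (u w)) +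
      (e + e ^ (1 - p) * (2 * (ENNReal.ofReal (b - a) ^ (τ - 1) * E))) := by
  have hab0 : a < b := by linarith
  have := aux_prob a b hab0
  have := aux_prob a' b' hab
  have hm : AEMeasurable (fun w => edist (u z) (u w)) (volume.restrict (Icc a' b')) := by
    apply ContinuousOn.aemeasurable _ measurableSet_Icc
    exact continuous_edist.comp_continuousOn (continuousOn_const.prodMk hu)
  have := aux_step p hp u z ((ENNReal.ofReal (b - a))⁻¹ • (volume : Measure ℝ).restrict (Icc a b))
    ((ENNReal.ofReal (b' - a'))⁻¹ • (volume : Measure ℝ).restrict (Icc a' b'))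
    (hm.smul_measure _) e he0 het
  simp only [lintegral_smul_measure, smul_eq_mul] at this
  refine this.trans (add_le_add le_rfl (add_le_add le_rfl (mul_le_mul_right ?_ _)))
  set L := ENNReal.ofReal (b - a) with hL
  have hL0 : L ≠ 0 := by simp [hL, hab0]
  have hLt : L ≠ ⊤ := ENNReal.ofReal_ne_top
  have hL' : (ENNReal.ofReal (b' - a'))⁻¹ = 2 * L⁻¹ := by
    rw [hl, ENNReal.ofReal_div_of_pos (by norm_num), ENNReal.inv_div (by simp) (by simp)]
    simp [div_eq_mul_inv, hL]
  have hsub : Icc a' b' ⊆ Icc a b := Icc_subset_Icc ha hb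
  have hLp : L ^ (1 + τ) ≠ ⊤ := by simp [ENNReal.rpow_eq_top_iff, hL0, hLt]
  calc L⁻¹ * ∫⁻ w in Icc a b, (ENNReal.ofReal (b' - a'))⁻¹ * ∫⁻ t in Icc a' b', edist (u w) (u t) ^ p
      ≤ L⁻¹ * ∫⁻ w in Icc a b, (2 * L⁻¹) * ∫⁻ t in Icc a b,
          L ^ (1 + τ) * (edist (u w) (u t) ^ p / edist w t ^ (1 + τ)) := by
        rw [hL']
        gcongr _ * ?_
        apply setLIntegral_mono' measurableSet_Icc
        intro w hw
        gcongr _ * ?_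
        refine (lintegral_mono_set hsub).trans ?_
        apply setLIntegral_mono' measurableSet_Icc
        intro t ht
        exact aux_pt p τ hp hτ u w t L (aux_edist_Icc hw ht)
    _ = L⁻¹ * ((2 * L⁻¹) * (L ^ (1 + τ) * ∫⁻ w in Icc a b, ∫⁻ t in Icc a b,
          (edist (u w) (u t) ^ p / edist w t ^ (1 + τ)))) := by
        rw [lintegral_const_mul' _ _ (by finiteness)]
        simp_rw [lintegral_const_mul' _ _ hLp]
    _ ≤ L⁻¹ * ((2 * L⁻¹) * (L ^ (1 + τ) * E)) := by gcongr
    _ = _ := by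
        have h1 : L ^ (1 + τ) = L ^ (τ - 1) * (L * L) := by
          rw [show 1 + τ = (τ - 1) + (1 + 1) by ring, ENNReal.rpow_add _ _ hL0 hLt,
            ENNReal.rpow_add _ _ hL0 hLt, ENNReal.rpow_one]
        rw [h1]
        calc _ = 2 * (L ^ (τ - 1) * E) * (L * L⁻¹) * (L * L⁻¹) := by ring
          _ = _ := by rw [ENNReal.mul_inv_cancel hL0 hLt]; simp

lemma aux_avg {X : Type*} [MetricSpace X] (p τ : ℝ) (hp : 1 < p) (hτ : 1 < τ) (u : ℝ → X)
    (x y z : ℝ) (hxy : x < y) (hz : z ∈ Icc x y) (hu : ContinuousOn u (Icc x y))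
    (M r : ℝ) (hM : 0 < M) (hr : r = (1 / 2 : ℝ) ^ ((τ - 1) / p))
    (hE : ENNReal.ofReal (y - x) ^ (τ - 1) * 
      (∫⁻ w in Icc x y, ∫⁻ t in Icc x y, edist (u w) (u t) ^ p / edist w t ^ (1 + τ))
        ≤ ENNReal.ofReal M ^ p) :
    (ENNReal.ofReal (y - x))⁻¹ * ∫⁻ w in Icc x y, edist (u z) (u w) ≤
      ENNReal.ofReal ((3 / (1 - r) + 1) * M) := by
  set E := ∫⁻ w in Icc x y, ∫⁻ t in Icc x y, edist (u w) (u t) ^ p / edist w t ^ (1 + τ) with hEdef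
  have hr0 : 0 < r := by rw [hr]; positivity
  have hr1 : r < 1 := by
    rw [hr]; exact Real.rpow_lt_one (by norm_num) (by norm_num) (div_pos (by linarith) (by linarith))
  let a : ℕ → ℝ := fun k => z - (1 / 2) ^ k * (z - x)
  let b : ℕ → ℝ := fun k => z + (1 / 2) ^ k * (y - z)
  have hlen : ∀ k, b k - a k = (1 / 2) ^ k * (y - x) := fun k => by simp only [a, b]; ring
  have hpos : ∀ k : ℕ, (0 : ℝ) < (1 / 2) ^ k := fun k => by positivity
  have hle1 : ∀ k : ℕ, ((1 : ℝ) / 2) ^ k ≤ 1 := fun k => pow_le_one₀ (by norm_num) (by norm_num)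
  have hab : ∀ k, a k < b k := fun k => by
    have := hlen k
    have h2 : 0 < (1 / 2) ^ k * (y - x) := mul_pos (hpos k) (by linarith)
    linarith
  have hxa : ∀ k, x ≤ a k := fun k => by
    have := mul_le_mul_of_nonneg_right (hle1 k) (show 0 ≤ z - x by linarith [hz.1])
    simp only [a]; linarith
  have hby : ∀ k, b k ≤ y := fun k => by
    have := mul_le_mul_of_nonneg_right (hle1 k) (show 0 ≤ y - z by linarith [hz.2])
    simp only [b]; linarith
  have haa : ∀ k, a k ≤ a (k + 1) := fun k => by
    have := mul_nonneg (hpos k).le (show 0 ≤ z - x by linarith [hz.1])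
    simp only [a, pow_succ]; linarith
  have hbb : ∀ k, b (k + 1) ≤ b k := fun k => by
    have := mul_nonneg (hpos k).le (show 0 ≤ y - z by linarith [hz.2])
    simp only [b, pow_succ]; linarith
  have hsub : ∀ k, Icc (a k) (b k) ⊆ Icc x y := fun k => Icc_subset_Icc (hxa k) (hby k)
  let A : ℕ → ℝ≥0∞ := fun k =>
    (ENNReal.ofReal (b k - a k))⁻¹ * ∫⁻ w in Icc (a k) (b k), edist (u z) (u w)
  have hstep : ∀ k, A k ≤ A (k + 1) + ENNReal.ofReal (3 * (M * r ^ k)) := by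
    intro k
    have hMr : 0 < M * r ^ k := by positivity
    set e := ENNReal.ofReal (M * r ^ k) with he
    have he0 : e ≠ 0 := by simp only [he, ne_eq, ENNReal.ofReal_eq_zero, not_le]; exact hMr
    have het : e ≠ ⊤ := ENNReal.ofReal_ne_top
    have h1 := aux_step2 p τ hp hτ u z (a k) (b k) (a (k + 1)) (b (k + 1)) (haa k) (hbb k)
      (hab _) (by rw [hlen, hlen, pow_succ]; ring) (hu.mono (hsub _)) e E he0 het
      (by
        refine (lintegral_mono_set (hsub k)).trans ?_
        apply lintegral_mono
        intro w
        exact lintegral_mono_set (hsub k))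
    refine h1.trans ?_
    refine add_le_add le_rfl ?_
    have h2 : ENNReal.ofReal (b k - a k) ^ (τ - 1) * E ≤ e ^ p := by
      rw [hlen, ENNReal.ofReal_mul (hpos k).le, ENNReal.mul_rpow_of_nonneg _ _ (by linarith),
        mul_assoc, he, mul_comm M, ENNReal.ofReal_mul (by positivity),
        ENNReal.mul_rpow_of_nonneg _ _ (by linarith)]
      have h3 : ENNReal.ofReal ((1 / 2) ^ k) ^ (τ - 1) = ENNReal.ofReal (r ^ k) ^ p := by
        rw [ENNReal.ofReal_rpow_of_pos (hpos k), ENNReal.ofReal_rpow_of_pos (by positivity), hr]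
        congr 1
        rw [← Real.rpow_natCast, ← Real.rpow_natCast, ← Real.rpow_mul (by positivity),
          ← Real.rpow_mul (by positivity), ← Real.rpow_mul (by positivity)]
        congr 1
        field_simp
      rw [h3]
      gcongr
    calc e + e ^ (1 - p) * (2 * (ENNReal.ofReal (b k - a k) ^ (τ - 1) * E))
        ≤ e + e ^ (1 - p) * (2 * e ^ p) := by gcongr
      _ = e + 2 * e := by
          rw [mul_left_comm, ← ENNReal.rpow_add _ _ he0 het]; simp
      _ = ENNReal.ofReal (3 * (M * r ^ k)) := by
          rw [ENNReal.ofReal_mul (by norm_num), ← he, ENNReal.ofReal_ofNat]; ring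
  have hchain : ∀ n, A 0 ≤ A n + ENNReal.ofReal (∑ k ∈ Finset.range n, 3 * (M * r ^ k)) := by
    intro n
    induction n with
    | zero => simp
    | succ n ih =>
      refine ih.trans ?_
      rw [Finset.sum_range_succ, ENNReal.ofReal_add (Finset.sum_nonneg fun _ _ => by positivity)
        (by positivity), add_comm (ENNReal.ofReal (∑ k ∈ Finset.range n, _)), ← add_assoc]
      gcongr
      exact hstep n
  have hsum : ∀ n, ∑ k ∈ Finset.range n, 3 * (M * r ^ k) ≤ 3 / (1 - r) * M := by
    intro n
    have h1 : ∑ k ∈ Finset.range n, r ^ k ≤ (1 - r)⁻¹ := by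
      rw [← tsum_geometric_of_lt_one hr0.le hr1]
      exact (summable_geometric_of_lt_one hr0.le hr1).sum_le_tsum _ (fun _ _ => by positivity)
    rw [← Finset.mul_sum, ← Finset.mul_sum, div_eq_mul_inv]
    nlinarith
  have hend : ∃ n, A n ≤ ENNReal.ofReal M := by
    obtain ⟨ρ, hρ, hc⟩ := Metric.continuousWithinAt_iff.1 (hu z hz) M hM
    obtain ⟨n, hn⟩ := exists_pow_lt_of_lt_one (div_pos hρ (show 0 < y - x by linarith))
      (show (1 / 2 : ℝ) < 1 by norm_num)
    refine ⟨n, ?_⟩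
    rw [lt_div_iff₀ (by linarith)] at hn
    have hzn : z ∈ Icc (a n) (b n) := by
      constructor
      · have := mul_nonneg (hpos n).le (show 0 ≤ z - x by linarith [hz.1])
        simp only [a]; linarith
      · have := mul_nonneg (hpos n).le (show 0 ≤ y - z by linarith [hz.2])
        simp only [b]; linarith
    have h1 : ∫⁻ w in Icc (a n) (b n), edist (u z) (u w) ≤
        ∫⁻ w in Icc (a n) (b n), ENNReal.ofReal M := by
      apply setLIntegral_mono' measurableSet_Icc
      intro w hw
      rw [edist_comm, edist_dist]
      apply ENNReal.ofReal_le_ofReal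
      apply le_of_lt
      apply hc (hsub n hw)
      rw [Real.dist_eq]
      refine lt_of_le_of_lt ?_ hn
      rw [← hlen, abs_le]
      constructor <;> linarith [hw.1, hw.2, hzn.1, hzn.2]
    simp only [A]
    calc _ ≤ (ENNReal.ofReal (b n - a n))⁻¹ * ∫⁻ w in Icc (a n) (b n), ENNReal.ofReal M := by gcongr
      _ = _ := by
        rw [lintegral_const, Measure.restrict_apply_univ, Real.volume_Icc, mul_left_comm,
          ENNReal.inv_mul_cancel (by simp [hab n]) ENNReal.ofReal_ne_top, mul_one]
  obtain ⟨n, hn⟩ := hend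
  have h0 : A 0 = (ENNReal.ofReal (y - x))⁻¹ * ∫⁻ w in Icc x y, edist (u z) (u w) := by
    simp [A, a, b]
  rw [← h0]
  calc A 0 ≤ _ := hchain n
    _ ≤ ENNReal.ofReal M + ENNReal.ofReal (3 / (1 - r) * M) := by
        gcongr; exact hsum n
    _ = _ := by
        rw [← ENNReal.ofReal_add hM.le]
        · congr 1; ring
        · have : 0 < 1 - r := by linarith
          positivity

lemma aux_osc {X : Type*} [MetricSpace X] (p τ : ℝ) (hp : 1 < p) (hτ : 1 < τ) (u : ℝ → X)
    (x y : ℝ) (hxy : x < y) (hu : ContinuousOn u (Icc x y))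
    (r : ℝ) (hr : r = (1 / 2 : ℝ) ^ ((τ - 1) / p)) :
    oscE u (Icc x y) ^ p ≤ ENNReal.ofReal (2 * (3 / (1 - r) + 1)) ^ p *
      (ENNReal.ofReal (y - x) ^ (τ - 1) * 
      (∫⁻ w in Icc x y, ∫⁻ t in Icc x y, edist (u w) (u t) ^ p / edist w t ^ (1 + τ))) := by
  have hr0 : 0 < r := by rw [hr]; positivity
  have hr1 : r < 1 := by
    rw [hr]; exact Real.rpow_lt_one (by norm_num) (by norm_num) (div_pos (by linarith) (by linarith))
  have hr2 : 0 < 1 - r := by linarith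
  set F := (ENNReal.ofReal (y - x) ^ (τ - 1) * 
      (∫⁻ w in Icc x y, ∫⁻ t in Icc x y, edist (u w) (u t) ^ p / edist w t ^ (1 + τ))) with hF
  have hp0 : 0 < p := by linarith
  have key : ∀ M : ℝ, 0 < M → F ≤ ENNReal.ofReal M ^ p →
      oscE u (Icc x y) ≤ ENNReal.ofReal (2 * (3 / (1 - r) + 1)) * ENNReal.ofReal M := by
    intro M hM hFM
    unfold oscE
    refine iSup₂_le fun z hz => iSup₂_le fun t ht => ?_
    have h1 := aux_avg p τ hp hτ u x y z hxy hz hu M r hM hr hFM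
    have h2 := aux_avg p τ hp hτ u x y t hxy ht hu M r hM hr hFM
    have := aux_prob x y hxy
    have hm : AEMeasurable (fun w => edist (u z) (u w)) (volume.restrict (Icc x y)) := by
      apply ContinuousOn.aemeasurable _ measurableSet_Icc
      exact continuous_edist.comp_continuousOn (continuousOn_const.prodMk hu)
    calc edist (u z) (u t) = ∫⁻ w, edist (u z) (u t)
          ∂((ENNReal.ofReal (y - x))⁻¹ • (volume : Measure ℝ).restrict (Icc x y)) := by
          rw [lintegral_const, measure_univ, mul_one]
      _ ≤ ∫⁻ w, (edist (u z) (u w) + edist (u t) (u w))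
          ∂((ENNReal.ofReal (y - x))⁻¹ • (volume : Measure ℝ).restrict (Icc x y)) := by
          apply lintegral_mono
          intro w
          exact edist_triangle_right _ _ _
      _ ≤ ENNReal.ofReal ((3 / (1 - r) + 1) * M) + ENNReal.ofReal ((3 / (1 - r) + 1) * M) := by
          rw [lintegral_add_left' (hm.smul_measure _)]
          simp only [lintegral_smul_measure, smul_eq_mul]
          exact add_le_add h1 h2
      _ = _ := by
          rw [← ENNReal.ofReal_add (by positivity) (by positivity),
            ← ENNReal.ofReal_mul (by positivity)]
          congr 1; ring
  set K := ENNReal.ofReal (2 * (3 / (1 - r) + 1)) with hK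
  have hK0 : K ≠ 0 := by
    simp only [hK, ne_eq, ENNReal.ofReal_eq_zero, not_le]; positivity
  have hKt : K ≠ ⊤ := ENNReal.ofReal_ne_top
  have hKp0 : K ^ p ≠ 0 := by simp [ENNReal.rpow_eq_zero_iff, hK0, hKt]
  have hKpt : K ^ p ≠ ⊤ := by simp [ENNReal.rpow_eq_top_iff, hK0, hKt]
  rw [mul_comm, ← ENNReal.div_le_iff hKp0 hKpt]
  apply le_of_forall_gt_imp_ge_of_dense
  intro c hc
  rcases eq_or_ne c ⊤ with rfl | hct
  · exact le_top
  have hc0 : c ≠ 0 := (bot_le.trans_lt hc).ne'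
  have hcp0 : c ^ (1 / p) ≠ 0 := by simp [ENNReal.rpow_eq_zero_iff, hc0, hct]
  have hcpt : c ^ (1 / p) ≠ ⊤ := by simp [ENNReal.rpow_eq_top_iff, hc0, hct]
  have hcM : ENNReal.ofReal (c ^ (1 / p)).toReal ^ p = c := by
    rw [ENNReal.ofReal_toReal hcpt, ← ENNReal.rpow_mul, one_div_mul_cancel hp0.ne',
      ENNReal.rpow_one]
  have h1 := key (c ^ (1 / p)).toReal (ENNReal.toReal_pos hcp0 hcpt) (by rw [hcM]; exact hc.le)
  rw [ENNReal.div_le_iff hKp0 hKpt]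
  calc oscE u (Icc x y) ^ p ≤ (K * ENNReal.ofReal (c ^ (1 / p)).toReal) ^ p := by gcongr
    _ = c * K ^ p := by rw [ENNReal.mul_rpow_of_nonneg _ _ hp0.le, hcM, mul_comm]

lemma aux_osc_u {X : Type*} [MetricSpace X] (p τ : ℝ) (hp : 1 < p) (hτ : 1 < τ) (u : ℝ → X)
    (x y : ℝ) (hxy : x ≠ y) (hu : ContinuousOn u (uIcc x y))
    (r : ℝ) (hr : r = (1 / 2 : ℝ) ^ ((τ - 1) / p)) :
    oscE u (uIcc x y) ^ p ≤ ENNReal.ofReal (2 * (3 / (1 - r) + 1)) ^ p *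
      (edist x y ^ (τ - 1) *
      (∫⁻ w in uIcc x y, ∫⁻ t in uIcc x y, edist (u w) (u t) ^ p / edist w t ^ (1 + τ))) := by
  have h := aux_osc p τ hp hτ u (min x y) (max x y) (by simpa using hxy.symm) hu r hr
  rwa [show ENNReal.ofReal (max x y - min x y) = edist x y by
    rw [max_sub_min_eq_abs, edist_dist, Real.dist_eq, abs_sub_comm]] at h

lemma aux_geom (x y z t : ℝ) (hz : z ∈ uIcc x y) (ht : t ∈ uIcc x y) :
    (edist z t ≤ edist x z ∧ edist x z ≤ edist x y) ∨
    (edist z t ≤ edist x t ∧ edist x t ≤ edist x y) := by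
  simp only [edist_dist, Real.dist_eq, ENNReal.ofReal_le_ofReal_iff (abs_nonneg _)]
  rw [mem_uIcc] at hz ht
  grind

lemma aux_meas {X : Type*} [MetricSpace X] (p q : ℝ) (hp : 0 < p) (I : Set ℝ) (hI : IsOpen I)
    (u : ℝ → X) (hu : ContinuousOn u I) :
    Measurable ((I ×ˢ I).indicator
      (fun Q : ℝ × ℝ => edist (u Q.1) (u Q.2) ^ p / edist Q.1 Q.2 ^ q)) := by
  have hm : MeasurableSet (I ×ˢ I) := (hI.prod hI).measurableSet
  have hD : Measurable ((I ×ˢ I).indicator (fun Q : ℝ × ℝ => edist (u Q.1) (u Q.2))) := by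
    classical
    rw [← piecewise_eq_indicator]
    refine ContinuousOn.measurable_piecewise ?_ continuousOn_const hm
    refine continuous_edist.comp_continuousOn (ContinuousOn.prodMk ?_ ?_)
    · exact hu.comp continuousOn_fst fun Q hQ => hQ.1
    · exact hu.comp continuousOn_snd fun Q hQ => hQ.2
  have : ((I ×ˢ I).indicator
      (fun Q : ℝ × ℝ => edist (u Q.1) (u Q.2) ^ p / edist Q.1 Q.2 ^ q)) = fun Q =>
      ((I ×ˢ I).indicator (fun Q : ℝ × ℝ => edist (u Q.1) (u Q.2)) Q) ^ p
        / edist Q.1 Q.2 ^ q := by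
    ext Q
    by_cases hQ : Q ∈ I ×ˢ I <;> simp [indicator, hQ, hp]
  rw [this]
  fun_prop

lemma aux_iter {X : Type*} [MetricSpace X] (p q : ℝ) (hp : 0 < p) (I : Set ℝ) (hI : IsOpen I)
    (u : ℝ → X) (hu : ContinuousOn u I) (J : Set ℝ) (hJ : MeasurableSet J) (hJI : J ⊆ I) :
    ∫⁻ w in J, ∫⁻ t in J, edist (u w) (u t) ^ p / edist w t ^ q =
     ∫⁻ Q in J ×ˢ J, (I ×ˢ I).indicator
      (fun Q : ℝ × ℝ => edist (u Q.1) (u Q.2) ^ p / edist Q.1 Q.2 ^ q) Q := by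
  rw [Measure.volume_eq_prod, ← Measure.prod_restrict,
    lintegral_prod _ (aux_meas p q hp I hI u hu).aemeasurable]
  apply setLIntegral_congr_fun hJ
  intro w hw
  apply setLIntegral_congr_fun hJ
  intro t ht
  simp [indicator, hJI hw, hJI ht]

/-- The kernel. -/
noncomputable def auxB (δ : ℝ) (R : (ℝ × ℝ) × (ℝ × ℝ)) : ℝ≥0∞ :=
  {R : (ℝ × ℝ) × (ℝ × ℝ) | edist R.2.1 R.2.2 ≤ edist R.1.1 R.2.1 ∧
    edist R.1.1 R.2.1 ≤ edist R.1.1 R.1.2}.indicator (fun R => edist R.1.1 R.1.2 ^ (-(2 + δ))) R +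
  {R : (ℝ × ℝ) × (ℝ × ℝ) | edist R.2.1 R.2.2 ≤ edist R.1.1 R.2.2 ∧
    edist R.1.1 R.2.2 ≤ edist R.1.1 R.1.2}.indicator (fun R => edist R.1.1 R.1.2 ^ (-(2 + δ))) R

lemma auxB_meas1 (δ : ℝ) : Measurable ({R : (ℝ × ℝ) × (ℝ × ℝ) | edist R.2.1 R.2.2 ≤ edist R.1.1 R.2.1 ∧
    edist R.1.1 R.2.1 ≤ edist R.1.1 R.1.2}.indicator (fun R => edist R.1.1 R.1.2 ^ (-(2 + δ)))) := by
  refine Measurable.indicator (by fun_prop) ?_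
  rw [ofPred_and]
  refine MeasurableSet.inter ?_ ?_
  · exact measurableSet_le (by fun_prop) (by fun_prop)
  · exact measurableSet_le (by fun_prop) (by fun_prop)

lemma auxB_meas2 (δ : ℝ) : Measurable ({R : (ℝ × ℝ) × (ℝ × ℝ) | edist R.2.1 R.2.2 ≤ edist R.1.1 R.2.2 ∧
    edist R.1.1 R.2.2 ≤ edist R.1.1 R.1.2}.indicator (fun R => edist R.1.1 R.1.2 ^ (-(2 + δ)))) := by
  refine Measurable.indicator (by fun_prop) ?_
  rw [ofPred_and]
  refine MeasurableSet.inter ?_ ?_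
  · exact measurableSet_le (by fun_prop) (by fun_prop)
  · exact measurableSet_le (by fun_prop) (by fun_prop)

lemma auxB_meas (δ : ℝ) : Measurable (auxB δ) := (auxB_meas1 δ).add (auxB_meas2 δ)

lemma auxB_int (δ : ℝ) (hδ : 0 < δ) (Q : ℝ × ℝ) (hQ : Q.1 ≠ Q.2) :
    ∫⁻ P : ℝ × ℝ, auxB δ (P, Q) ≤
      2 * (ENNReal.ofReal (2 / (1 + δ)) * (ENNReal.ofReal (2 / δ) * edist Q.1 Q.2 ^ (-δ))) := by
  have h0 : edist Q.1 Q.2 ≠ 0 := by simpa using hQ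
  have ht : edist Q.1 Q.2 ≠ ⊤ := edist_ne_top _ _
  have m1 : Measurable (fun P : ℝ × ℝ => (P, Q)) := by fun_prop
  unfold auxB
  have m2 := (auxB_meas1 δ).comp m1
  simp only [Function.comp_def] at m2
  have m3 := (auxB_meas2 δ).comp m1
  simp only [Function.comp_def] at m3
  rw [lintegral_add_left m2, two_mul]
  refine add_le_add ?_ ?_
  · rw [Measure.volume_eq_prod, lintegral_prod _ m2.aemeasurable]
    exact aux_kernel δ hδ _ h0 ht Q.1
  · rw [Measure.volume_eq_prod, lintegral_prod _ m3.aemeasurable]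
    exact aux_kernel δ hδ _ h0 ht Q.2

lemma aux_pointwise {X : Type*} [MetricSpace X] (p τ δ : ℝ) (hp : 1 < p) (hτ : 1 < τ) (hδ : 0 < δ)
    (I : Set ℝ) (hI : IsOpen I) (hI' : I.OrdConnected)
    (u : ℝ → X) (hu : ContinuousOn u I) (r : ℝ) (hr : r = (1 / 2 : ℝ) ^ ((τ - 1) / p))
    (x y : ℝ) (hx : x ∈ I) (hy : y ∈ I) :
    oscE u (uIcc x y ∩ I) ^ p / edist x y ^ (1 + (τ + δ)) ≤
      ENNReal.ofReal (2 * (3 / (1 - r) + 1)) ^ p * ∫⁻ Q : ℝ × ℝ, auxB δ ((x, y), Q) *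
        (I ×ˢ I).indicator
          (fun Q : ℝ × ℝ => edist (u Q.1) (u Q.2) ^ p / edist Q.1 Q.2 ^ (1 + τ)) Q := by
  have hp0 : 0 < p := by linarith
  have hJI : uIcc x y ⊆ I := hI'.uIcc_subset hx hy
  rw [inter_eq_left.2 hJI]
  rcases eq_or_ne x y with rfl | hxy
  · have : oscE u (uIcc x x) = 0 := by simp [oscE]
    rw [this, ENNReal.zero_rpow_of_pos hp0, ENNReal.zero_div]; exact bot_le
  have h0 : edist x y ≠ 0 := by simpa using hxy
  have ht : edist x y ≠ ⊤ := edist_ne_top _ _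
  have hLt : edist x y ^ (-(2 + δ)) ≠ ⊤ := by simp [ENNReal.rpow_eq_top_iff, h0, ht]
  have h1 := aux_osc_u p τ hp hτ u x y hxy (hu.mono hJI) r hr
  have hJ : MeasurableSet (uIcc x y) := measurableSet_Icc
  rw [aux_iter p (1 + τ) hp0 I hI u hu _ hJ hJI] at h1
  rw [div_eq_mul_inv, ← ENNReal.rpow_neg]
  calc _ ≤ _ := mul_le_mul_left h1 _
    _ = ENNReal.ofReal (2 * (3 / (1 - r) + 1)) ^ p * (edist x y ^ (-(2 + δ)) *
        ∫⁻ Q in uIcc x y ×ˢ uIcc x y, (I ×ˢ I).indicator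
      (fun Q : ℝ × ℝ => edist (u Q.1) (u Q.2) ^ p / edist Q.1 Q.2 ^ (1 + τ)) Q) := by
        rw [show -(2 + δ) = (τ - 1) + -(1 + (τ + δ)) by ring, ENNReal.rpow_add _ _ h0 ht]
        ring
    _ ≤ _ := by
        gcongr
        rw [← lintegral_const_mul' _ _ hLt, ← lintegral_indicator (hJ.prod hJ)]
        apply lintegral_mono
        rintro ⟨z, t⟩
        by_cases hQ : (z, t) ∈ uIcc x y ×ˢ uIcc x y
        · rw [indicator_of_mem hQ]
          refine mul_le_mul_left ?_ _
          unfold auxB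
          rcases aux_geom x y z t hQ.1 hQ.2 with h | h
          · refine le_trans ?_ le_self_add
            rw [indicator_of_mem (by exact h)]
          · refine le_trans ?_ le_add_self
            rw [indicator_of_mem (by exact h)]
        · rw [indicator_of_notMem hQ]; exact bot_le

lemma aux_main {X : Type*} [MetricSpace X] (p τ δ : ℝ) (hp : 1 < p) (hτ : 1 < τ) (hδ : 0 < δ)
    (I : Set ℝ) (hI : IsOpen I) (hI' : I.OrdConnected)
    (u : ℝ → X) (hu : ContinuousOn u I) (r : ℝ) (hr : r = (1 / 2 : ℝ) ^ ((τ - 1) / p)) :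
    (∫⁻ x in I, ∫⁻ y in I, oscE u (uIcc x y ∩ I) ^ p / edist x y ^ (1 + (τ + δ))) ≤
      ENNReal.ofReal (2 * (3 / (1 - r) + 1)) ^ p *
        ((2 * (ENNReal.ofReal (2 / (1 + δ)) * ENNReal.ofReal (2 / δ))) *
        ∫⁻ x in I, ∫⁻ y in I, edist (u x) (u y) ^ p / edist x y ^ (1 + (τ + δ))) := by
  have hp0 : 0 < p := by linarith
  have hKt : ENNReal.ofReal (2 * (3 / (1 - r) + 1)) ^ p ≠ ⊤ :=
    ENNReal.rpow_ne_top_of_nonneg hp0.le ENNReal.ofReal_ne_top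
  have hIm := hI.measurableSet
  have hG := aux_meas p (1 + τ) hp0 I hI u hu
  set G := (I ×ˢ I).indicator
          (fun Q : ℝ × ℝ => edist (u Q.1) (u Q.2) ^ p / edist Q.1 Q.2 ^ (1 + τ)) with hGdef
  have hBG : Measurable (fun R : (ℝ × ℝ) × (ℝ × ℝ) => auxB δ R * G R.2) :=
    (auxB_meas δ).mul (hG.comp measurable_snd)
  calc _ ≤ ∫⁻ x in I, ∫⁻ y in I, ENNReal.ofReal (2 * (3 / (1 - r) + 1)) ^ p *
          ∫⁻ Q : ℝ × ℝ, auxB δ ((x, y), Q) * G Q := by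
        apply setLIntegral_mono' hIm
        intro x hx
        apply setLIntegral_mono' hIm
        intro y hy
        exact aux_pointwise p τ δ hp hτ hδ I hI hI' u hu r hr x y hx hy
    _ = ENNReal.ofReal (2 * (3 / (1 - r) + 1)) ^ p *
          ∫⁻ x in I, ∫⁻ y in I, ∫⁻ Q : ℝ × ℝ, auxB δ ((x, y), Q) * G Q := by
        simp_rw [lintegral_const_mul' _ _ hKt]
    _ ≤ ENNReal.ofReal (2 * (3 / (1 - r) + 1)) ^ p *
          ∫⁻ x, ∫⁻ y, ∫⁻ Q : ℝ × ℝ, auxB δ ((x, y), Q) * G Q := by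
        refine mul_le_mul_right ?_ _
        refine (setLIntegral_le_lintegral _ _).trans (lintegral_mono fun x => ?_)
        exact setLIntegral_le_lintegral _ _
    _ ≤ _ := by
        gcongr
        have e1 : ∫⁻ x, ∫⁻ y, ∫⁻ Q : ℝ × ℝ, auxB δ ((x, y), Q) * G Q =
            ∫⁻ P : ℝ × ℝ, ∫⁻ Q : ℝ × ℝ, auxB δ (P, Q) * G Q := by
          rw [Measure.volume_eq_prod ℝ ℝ]
          rw [lintegral_prod (fun P : ℝ × ℝ => ∫⁻ Q, auxB δ (P, Q) * G Q
            ∂((volume : Measure ℝ).prod volume)) (hBG.lintegral_prod_right').aemeasurable]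
        rw [e1, lintegral_lintegral_swap hBG.aemeasurable,
          aux_iter p (1 + (τ + δ)) hp0 I hI u hu I hIm subset_rfl,
          ← lintegral_const_mul' _ _ (by finiteness)]
        rw [← lintegral_indicator (hIm.prod hIm)]
        apply lintegral_mono
        intro Q
        dsimp only
        by_cases hQ : Q ∈ I ×ˢ I
        swap
        · simp [hGdef, indicator_of_notMem hQ]
        have hGt : G Q = edist (u Q.1) (u Q.2) ^ p / edist Q.1 Q.2 ^ (1 + τ) := by
          rw [hGdef, indicator_of_mem hQ]
        rw [indicator_of_mem hQ, indicator_of_mem hQ]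
        rcases eq_or_ne Q.1 Q.2 with hne | hne
        · have : G Q = 0 := by rw [hGt, hne]; simp [hp0]
          simp [this]
        have h0 : edist Q.1 Q.2 ≠ 0 := by simpa using hne
        have ht : edist Q.1 Q.2 ≠ ⊤ := edist_ne_top _ _
        have hBm : Measurable (fun P : ℝ × ℝ => auxB δ (P, Q)) :=
          (auxB_meas δ).comp (by fun_prop)
        rw [lintegral_mul_const _ hBm]
        refine (mul_le_mul_left (auxB_int δ hδ Q hne) _).trans (le_of_eq ?_)
        rw [hGt, div_eq_mul_inv (edist (u Q.1) (u Q.2) ^ p),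
          div_eq_mul_inv (edist (u Q.1) (u Q.2) ^ p), ← ENNReal.rpow_neg, ← ENNReal.rpow_neg,
          show -(1 + (τ + δ)) = -δ + -(1 + τ) by ring, ENNReal.rpow_add _ _ h0 ht]
        ring

/-- **Reverse oscillation inequality for metric-space valued maps.** For `0 < s < 1`,
`1 < p` with `sp > 1`, there is a constant `C = C(s,p)` such that for every metric space `X`,
every open interval `I ⊆ ℝ` (an open order-connected set) and every continuous `u : I → X`,
`∫_I ∫_I (osc_{[x,y]} u)^p / |y-x|^{1+sp} ≤ C ∫_I ∫_I d(u(x),u(y))^p / |y-x|^{1+sp}`. -/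
theorem reverse_oscillation_inequality_metric (s p : ℝ) (hs0 : 0 < s) (hs1 : s < 1)
    (hp1 : 1 < p) (hsp : 1 < s * p) :
    ∃ C : ℝ, 0 < C ∧ ∀ (X : Type*) [MetricSpace X] (I : Set ℝ), IsOpen I → I.OrdConnected →
      ∀ u : ℝ → X, ContinuousOn u I →
        (∫⁻ x in I, ∫⁻ y in I,
            oscE u (uIcc x y ∩ I) ^ p / edist x y ^ (1 + s * p)) ≤
          ENNReal.ofReal C *
            ∫⁻ x in I, ∫⁻ y in I,
              edist (u x) (u y) ^ p / edist x y ^ (1 + s * p) := by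
  obtain ⟨τ, hτ⟩ : ∃ τ, τ = (1 + s * p) / 2 := ⟨_, rfl⟩
  obtain ⟨δ, hδ⟩ : ∃ δ, δ = (s * p - 1) / 2 := ⟨_, rfl⟩
  obtain ⟨r, hr⟩ : ∃ r : ℝ, r = (1 / 2 : ℝ) ^ ((τ - 1) / p) := ⟨_, rfl⟩
  have hτ1 : 1 < τ := by linarith
  have hδ0 : 0 < δ := by linarith
  have hr1 : r < 1 := by
    rw [hr]; exact Real.rpow_lt_one (by norm_num) (by norm_num) (div_pos (by linarith) (by linarith))
  have hr2 : 0 < 1 - r := by linarith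
  refine ⟨(2 * (3 / (1 - r) + 1)) ^ p * (2 * (2 / (1 + δ) * (2 / δ))), by positivity, ?_⟩
  intro X _ I hI hI' u hu
  have h := aux_main p τ δ hp1 hτ1 hδ0 I hI hI' u hu r hr
  rw [show τ + δ = s * p by linarith] at h
  refine h.trans (le_of_eq ?_)
  rw [← mul_assoc]
  congr 1
  have hb : 0 < 2 * (3 / (1 - r) + 1) := by positivity
  rw [ENNReal.ofReal_mul (p := (2 * (3 / (1 - r) + 1)) ^ p) (Real.rpow_nonneg hb.le p),
    ENNReal.ofReal_mul (p := 2) (q := 2 / (1 + δ) * (2 / δ)) (by norm_num),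
    ENNReal.ofReal_mul (p := 2 / (1 + δ)) (by positivity), ENNReal.ofReal_ofNat,
    ENNReal.ofReal_rpow_of_pos hb]
end

section
/- Let (Ñ, d_Ñ) and (N, d_N) be metric spaces and π : Ñ → N be nonexpansive (d_N(π(a),π(b)) ≤ d_Ñ(a,b) for all a,b) and an isometry at scale ρ>0 (d_N(π(a),π(b)) = d_Ñ(a,b) whenever d_Ñ(a,b) ≤ ρ). Assume Ñ has diameter at most D < ∞. Let I ⊆ ℝ be an interval and ũ : I → Ñ be continuous, and set u := π ∘ ũ. Then for all x ≤ y in I, d_Ñ(ũ(x), ũ(y)) ≤ max(1, D/ρ) · osc_{[x,y]} u. -/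
open MeasureTheory Set ENNReal

/-- Let `π : Ñ → N` be nonexpansive and an isometry at scale `ρ > 0`, with `Ñ` of diameter
at most `D`. If `I ⊆ ℝ` is an interval, `ũ : I → Ñ` is continuous and `u = π ∘ ũ`, then for
all `x ≤ y` in `I`, `d_Ñ(ũ(x),ũ(y)) ≤ max(1, D/ρ) · osc_{[x,y]} u`. -/
theorem lift_dist_le_osc {Ntl N : Type*} [MetricSpace Ntl] [MetricSpace N]
    (π : Ntl → N) (ρ D : ℝ) (hρ : 0 < ρ)
    (hnonexp : ∀ a b : Ntl, dist (π a) (π b) ≤ dist a b)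
    (hiso : ∀ a b : Ntl, dist a b ≤ ρ → dist (π a) (π b) = dist a b)
    (hD : ∀ a b : Ntl, dist a b ≤ D)
    (I : Set ℝ) (hI : I.OrdConnected) (ut : ℝ → Ntl) (hut : ContinuousOn ut I) :
    ∀ x ∈ I, ∀ y ∈ I, x ≤ y →
      edist (ut x) (ut y) ≤
        ENNReal.ofReal (max 1 (D / ρ)) * oscE (fun z => π (ut z)) (Icc x y ∩ I) := by
  intro x hx y hy hxy
  have hsub : Icc x y ⊆ I := hI.out hx hy
  have hosc : ∀ t ∈ Icc x y, edist (π (ut x)) (π (ut t)) ≤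
      oscE (fun z => π (ut z)) (Icc x y ∩ I) := by
    intro t ht
    have hx' : x ∈ Icc x y ∩ I := ⟨left_mem_Icc.2 hxy, hx⟩
    have ht' : t ∈ Icc x y ∩ I := ⟨ht, hsub ht⟩
    exact le_iSup₂_of_le x hx' (le_iSup₂_of_le t ht' le_rfl)
  rcases le_total (dist (ut x) (ut y)) ρ with h | h
  · have h1 : edist (ut x) (ut y) = edist (π (ut x)) (π (ut y)) := by
      rw [edist_dist, edist_dist, hiso _ _ h]
    rw [h1]
    calc edist (π (ut x)) (π (ut y)) = 1 * edist (π (ut x)) (π (ut y)) := (one_mul _).symm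
      _ ≤ _ := by
        refine mul_le_mul' ?_ (hosc y (right_mem_Icc.2 hxy))
        rw [← ENNReal.ofReal_one]
        exact ENNReal.ofReal_le_ofReal (le_max_left _ _)
  · have hc : ContinuousOn (fun t => dist (ut x) (ut t)) (Icc x y) :=
      (Continuous.dist continuous_const continuous_id).comp_continuousOn (hut.mono hsub)
    have hmem : ρ ∈ Icc (dist (ut x) (ut x)) (dist (ut x) (ut y)) :=
      ⟨by rw [dist_self]; exact hρ.le, h⟩
    obtain ⟨t, ht, hte⟩ := intermediate_value_Icc hxy hc hmem
    have hte' : dist (ut x) (ut t) = ρ := hte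
    have h2 : edist (π (ut x)) (π (ut t)) = ENNReal.ofReal ρ := by
      rw [edist_dist, hiso _ _ hte'.le, hte']
    calc edist (ut x) (ut y) ≤ ENNReal.ofReal D := by
          rw [edist_dist]; exact ENNReal.ofReal_le_ofReal (hD _ _)
      _ = ENNReal.ofReal (D / ρ) * ENNReal.ofReal ρ := by
          rw [← ENNReal.ofReal_mul' hρ.le, div_mul_cancel₀ _ hρ.ne']
      _ ≤ _ := by
        refine mul_le_mul' (ENNReal.ofReal_le_ofReal (le_max_right _ _)) ?_
        rw [← h2]
        exact hosc t ht
end
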